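/- The theory Th(U) is model complete: whenever U′ and U″ are models of Th(U) such that U′ is a substructure of U″, the inclusion of U′ into U″ is an elementary embedding. -/

import Mathlib

universe u

open FirstOrder FirstOrder.Language FirstOrder.Language.Structure CategoryTheory

namespace Ivanov

/-- The relation symbols of the finite language `L`:
four unary symbols `P`, `Q`, `λ`, `ρ`, a binary `H` and a 4-ary `S`. -/
inductive LRel : ℕ → Type
  | P : LRel 1
  | Q : LRel 1
  | lam : LRel 1
  | rho : LRel 1
  | H : LRel 2
  | S : LRel 4

/-- The finite language `L`. -/
def L : Language := ⟨fun _ => Empty, LRel⟩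

/-- The relational language having a relation symbol `Rₙ` of arity `ar n` for each
index `n ∈ s` with `0 < n`. -/
def L0r (ar : ℕ → ℕ) (s : Set ℕ) : Language :=
  ⟨fun _ => Empty, fun k => {n : ℕ // 0 < n ∧ n ∈ s ∧ ar n = k}⟩

/-- The relation symbol `Rₙ`. -/
def R (ar : ℕ → ℕ) (s : Set ℕ) (n : ℕ) (h1 : 0 < n) (h2 : n ∈ s) :
    (L0r ar s).Relations (ar n) := ⟨n, h1, h2, rfl⟩

/-- The language `L ∪ L₀`. -/
def LFull (ar : ℕ → ℕ) (s : Set ℕ) : Language := L.sum (L0r ar s)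

instance (ar : ℕ → ℕ) (s : Set ℕ) (n : ℕ) : IsEmpty ((LFull ar s).Functions n) :=
  ⟨fun f => Sum.elim Empty.elim Empty.elim f⟩

instance (ar : ℕ → ℕ) (s : Set ℕ) (n : ℕ) : IsEmpty ((L0r ar s).Functions n) :=
  ⟨fun f => Empty.elim f⟩

section

variable (ar : ℕ → ℕ) (s : Set ℕ) {M : Type u} [(LFull ar s).Structure M]

/-- `x` satisfies the unary predicate `P`. -/
def isP (x : M) : Prop := RelMap (L := LFull ar s) (n := 1) (Sum.inl LRel.P) ![x]

/-- `x` satisfies the unary predicate `Q`. -/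
def isQ (x : M) : Prop := RelMap (L := LFull ar s) (n := 1) (Sum.inl LRel.Q) ![x]

/-- `x` satisfies the unary predicate `λ`. -/
def isLam (x : M) : Prop := RelMap (L := LFull ar s) (n := 1) (Sum.inl LRel.lam) ![x]

/-- `x` satisfies the unary predicate `ρ`. -/
def isRho (x : M) : Prop := RelMap (L := LFull ar s) (n := 1) (Sum.inl LRel.rho) ![x]

/-- the binary predicate `H`. -/
def isH (x y : M) : Prop := RelMap (L := LFull ar s) (n := 2) (Sum.inl LRel.H) ![x, y]

/-- the 4-ary predicate `S`. -/
def isS (x y z w : M) : Prop := RelMap (L := LFull ar s) (n := 4) (Sum.inl LRel.S) ![x, y, z, w]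

/-- The basic conditions on the `(L ∪ L₀)`-structures under consideration: `P` and `Q`
partition the universe, `λ`, `ρ`, `H` hold only on `Q`, the `Rₙ` hold only on tuples from `P`,
and `S(a,b,c,d)` implies `a, c ∈ P`, `b, d ∈ Q`. -/
structure IsGood (M : Type u) [(LFull ar s).Structure M] : Prop where
  part : ∀ x : M, isP ar s x ∨ isQ ar s x
  not_both : ∀ x : M, ¬(isP ar s x ∧ isQ ar s x)
  lam_q : ∀ x : M, isLam ar s x → isQ ar s x
  rho_q : ∀ x : M, isRho ar s x → isQ ar s x
  h_q : ∀ x y : M, isH ar s x y → isQ ar s x ∧ isQ ar s y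
  r_p : ∀ (k : ℕ) (r : (L0r ar s).Relations k) (t : Fin k → M),
    RelMap (L := LFull ar s) (n := k) (Sum.inr r) t → ∀ i, isP ar s (t i)
  s_pq : ∀ x y z w : M, isS ar s x y z w →
    isP ar s x ∧ isQ ar s y ∧ isP ar s z ∧ isQ ar s w

/-- `(a, c)` is an `n`-pair of arity `m` (labelling the tuple `a`). -/
structure IsNPair {M : Type u} [(LFull ar s).Structure M] (n m : ℕ)
    (a : Fin m → M) (c : Fin n → M) : Prop where
  le : m ≤ n
  aP : ∀ i, isP ar s (a i)
  cQ : ∀ j, isQ ar s (c j)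
  inj : Function.Injective c
  hH : ∀ i j : Fin n, isH ar s (c i) (c j) ↔ (j : ℕ) = ((i : ℕ) + 1) % n
  hlam : ∀ i : Fin n, isLam ar s (c i) ↔ (i : ℕ) = 0
  hrho : ∀ i : Fin n, isRho ar s (c i) ↔ (i : ℕ) = m - 1
  hS : ∀ (i k : Fin m) (j l : Fin n),
    isS ar s (a i) (c j) (a k) (c l) ↔ a i = a k

/-- The induced structure on a subset of a structure in a relational language. -/
def inducedStr (A : Set M) : (LFull ar s).Structure A where
  funMap := fun {_} f _ => isEmptyElim f
  RelMap := fun {_} r t => RelMap r fun i => (t i : M)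

end

/-- The `P`-part of a structure. -/
abbrev Ppart (ar : ℕ → ℕ) (s : Set ℕ) (M : Type u) [(LFull ar s).Structure M] : Type u :=
  {x : M // isP ar s x}

/-- The `L₀`-structure induced on the `P`-part by the relations `Rₙ`. -/
instance PpartStr (ar : ℕ → ℕ) (s : Set ℕ) (M : Type u) [(LFull ar s).Structure M] :
    (L0r ar s).Structure (Ppart ar s M) where
  funMap := fun {_} f _ => isEmptyElim f
  RelMap := fun {_} r t => RelMap (L := LFull ar s) (Sum.inr r) fun i => (t i : M)

/-- The class `K` of all finite `(L ∪ L₀)`-structures `D` satisfying the basic conditions,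
whose `P`-part is isomorphic to a substructure of `M₀`, and in which, for every `n`, every
`n`-pair whose arity equals the arity of `Rₙ` labels a tuple satisfying `Rₙ`. -/
def Kclass (ar : ℕ → ℕ) (s : Set ℕ) (M₀ : Type u) [(L0r ar s).Structure M₀] :
    Set (Bundled.{u} (LFull ar s).Structure) :=
  {D | Finite D ∧ IsGood ar s D ∧
    Nonempty (Ppart ar s D ↪[L0r ar s] M₀) ∧
    ∀ (n : ℕ) (h1 : 0 < n) (h2 : n ∈ s) (a : Fin (ar n) → D) (c : Fin n → D),
      IsNPair ar s n (ar n) a c →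
        RelMap (L := LFull ar s) (n := ar n) (Sum.inr (R ar s n h1 h2)) a}
/-- The index set `{n : 1 ≤ n ≤ N}` of a finite sublanguage `L_i`. -/
def setLe (N : ℕ) : Set ℕ := {n | n ≤ N}

/-- The inclusion of sublanguages of `L₀`. -/
def L0incl (ar : ℕ → ℕ) {s t : Set ℕ} (h : s ⊆ t) : L0r ar s →ᴸ L0r ar t where
  onFunction := fun {_} f => f
  onRelation := fun {_} r => ⟨r.1, r.2.1, h r.2.2.1, r.2.2.2⟩

/-- The inclusion `L ∪ L_i → L ∪ L_j` of sublanguages of `L ∪ L₀`. -/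
def LFullincl (ar : ℕ → ℕ) {s t : Set ℕ} (h : s ⊆ t) : LFull ar s →ᴸ LFull ar t :=
  (LHom.id L).sumMap (L0incl ar h)

/-- The `L_i`-reduct structure on `M₀` (`L_i` given by the cutoff `N`). -/
def M0redStr (ar : ℕ → ℕ) (N : ℕ) (M₀ : Type u) [(L0r ar Set.univ).Structure M₀] :
    (L0r ar (setLe N)).Structure M₀ :=
  (L0incl ar (Set.subset_univ _)).reduct M₀

/-- The class `K_i` of finite `(L ∪ L_i)`-structures (`L_i` given by the cutoff `N`). -/
def Ksub (ar : ℕ → ℕ) (N : ℕ) (M₀ : Type u) [(L0r ar Set.univ).Structure M₀] :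
    Set (Bundled.{u} (LFull ar (setLe N)).Structure) :=
  letI := M0redStr ar N M₀
  Kclass ar (setLe N) M₀

/-!
`Th(U)` even eliminates quantifiers. The obstacle is that the axiom on `n`-pairs ties the relations
`Rₙ` for infinitely many `n` to the finite language `L`. But an `n`-pair has at least `n` elements,
so in a structure of size `N` it only concerns the `Rₙ` with `n ≤ N`. Let `L_t` be a finite part of
`L₀` containing these and such that the `L_t`-reduct of `M₀` eliminates quantifiers, and let the
tuple `b` of `U` have the same atomic `L ∪ L_t`-type as a subtuple of an `N`-tuple `a`. Keep the
`L`-structure generated by `a` and redefine all `Rₙ` on its `P`-part, without changing the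
`L_t`-relations, so that the subtuple gets the full quantifier-free type of `b`: this is possible by
quantifier elimination in the reduct of `M₀`. The result is still in `K`, and so by homogeneity it
embeds in `U` over `b`. This is the forth step between atomic types over finite languages that
quantifier elimination requires.
-/

section QuantifierElimination

variable {L' : Language} {M N K : Type*} [L'.Structure M] [L'.Structure N] [L'.Structure K]
  {α β ι κ : Type*}

/-- The tuples `a` and `b` satisfy the same equalities and the same atomic formulas `r(x_σ)` for
the relation symbols `r` in `Δ`. -/
structure SameAtomicType (Δ : Set (Σ n, L'.Relations n)) (a : α → M) (b : α → N) : Prop where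
  eq_iff : ∀ i j, a i = a j ↔ b i = b j
  rel_iff : ∀ {n : ℕ} (r : L'.Relations n), ⟨n, r⟩ ∈ Δ → ∀ σ : Fin n → α,
    RelMap r (a ∘ σ) ↔ RelMap r (b ∘ σ)

namespace SameAtomicType

variable {Δ Δ' : Set (Σ n, L'.Relations n)} {a : α → M} {b : α → N} {c : α → K}

lemma refl (Δ : Set (Σ n, L'.Relations n)) (a : α → M) : SameAtomicType Δ a a :=
  ⟨fun _ _ => Iff.rfl, fun _ _ _ => Iff.rfl⟩

lemma symm (h : SameAtomicType Δ a b) : SameAtomicType Δ b a :=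
  ⟨fun i j => (h.eq_iff i j).symm, fun r hr σ => (h.rel_iff r hr σ).symm⟩

lemma trans (h : SameAtomicType Δ a b) (h' : SameAtomicType Δ b c) : SameAtomicType Δ a c :=
  ⟨fun i j => (h.eq_iff i j).trans (h'.eq_iff i j),
    fun r hr σ => (h.rel_iff r hr σ).trans (h'.rel_iff r hr σ)⟩

lemma comp (h : SameAtomicType Δ a b) (f : β → α) : SameAtomicType Δ (a ∘ f) (b ∘ f) :=
  ⟨fun i j => h.eq_iff (f i) (f j), fun r hr σ => h.rel_iff r hr (f ∘ σ)⟩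

lemma mono (h : SameAtomicType Δ' a b) (hΔ : Δ ⊆ Δ') : SameAtomicType Δ a b :=
  ⟨h.eq_iff, fun r hr => h.rel_iff r (hΔ hr)⟩

lemma of_embedding (Δ : Set (Σ n, L'.Relations n)) (f : M ↪[L'] N) (a : α → M) :
    SameAtomicType Δ a (f ∘ a) :=
  ⟨fun _ _ => f.injective.eq_iff.symm, fun r _ σ => (f.map_rel r (a ∘ σ)).symm⟩

end SameAtomicType

/-- For a relational language `L'`, the tuples `a` and `b` have the same quantifier-free type. -/
abbrev SameQFType (L' : Language) [L'.Structure M] [L'.Structure N] (a : α → M) (b : α → N) :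
    Prop :=
  SameAtomicType (Set.univ : Set (Σ n, L'.Relations n)) a b

lemma SameQFType.exists_embedding_closure [L'.IsRelational] {a : α → M} {b : α → N}
    (h : SameQFType L' a b) :
    ∃ f : Substructure.closure L' (Set.range a) ↪[L'] N,
      ∀ i, f ⟨a i, Substructure.subset_closure ⟨i, rfl⟩⟩ = b i := by
  have index_exists (x : Substructure.closure L' (Set.range a)) : ∃ i, a i = x :=
    (Substructure.mem_closure_iff_of_isRelational L' (Set.range a) (x : M)).1 x.2
  choose k hk using index_exists
  refine ⟨⟨⟨b ∘ k, fun x y hxy => ?_⟩, fun f => isEmptyElim f, fun r t => ?_⟩, fun i => ?_⟩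
  · rw [Subtype.ext_iff, ← hk, ← hk]
    exact (h.eq_iff _ _).2 hxy
  · have hkt : a ∘ k ∘ t = (↑) ∘ t := funext fun i => hk (t i)
    exact (h.rel_iff r trivial (k ∘ t)).symm.trans (by rw [hkt]; rfl)
  · exact (h.eq_iff _ _).1 (hk _)

lemma exists_embedding_comp_eq [L'.IsRelational] (hN : L'.IsUltrahomogeneous N) [Finite ι]
    [Nonempty (M ↪[L'] N)] {a : ι → M} {b : ι → N}
    (h : SameQFType L' a b) :
    ∃ f : M ↪[L'] N, f ∘ a = b := by
  obtain ⟨f, hf⟩ := h.exists_embedding_closure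
  have hfg := (Substructure.fg_iff_structure_fg _).1
    (Substructure.fg_closure (L := L') (Set.finite_range a))
  obtain ⟨g, hg⟩ := hN.extend_embedding hfg f (Substructure.subtype _)
  exact ⟨g, funext fun i => by rw [← hf i, hg]; rfl⟩

lemma card_closure_range_le [L'.IsRelational] [Finite ι] (a : ι → M) :
    Nat.card (Substructure.closure L' (Set.range a)) ≤ Nat.card ι := by
  refine Nat.card_le_card_of_surjective
    (fun i => ⟨a i, Substructure.subset_closure ⟨i, rfl⟩⟩) fun x => ?_
  obtain ⟨i, hi⟩ := (Substructure.mem_closure_iff_of_isRelational L' (Set.range a) (x : M)).1 x.2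
  exact ⟨i, Subtype.ext hi⟩

lemma realize_embedding_comp_iff_of_isQF {φ : L'.Formula α} (hφ : φ.IsQF) (f : M ↪[L'] N)
    (a : α → M) : φ.Realize (f ∘ a) ↔ φ.Realize a := by
  rw [Formula.Realize, Subsingleton.elim default (f ∘ default), hφ.realize_embedding f]; rfl

lemma realize_iff_of_isQF_of_sameQFType [L'.IsRelational] {φ : L'.Formula α} (hφ : φ.IsQF)
    {a : α → M} {b : α → N}
    (h : SameQFType L' a b) :
    φ.Realize a ↔ φ.Realize b := by
  obtain ⟨f, hf⟩ := h.exists_embedding_closure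
  let a' (i : α) : Substructure.closure L' (Set.range a) :=
    ⟨a i, Substructure.subset_closure ⟨i, rfl⟩⟩
  obtain rfl : f ∘ a' = b := funext hf
  exact (realize_embedding_comp_iff_of_isQF hφ (Substructure.subtype _) a').trans
    (realize_embedding_comp_iff_of_isQF hφ f a').symm

lemma isQF_iInf {n : ℕ} [Finite ι] {φ : ι → L'.BoundedFormula α n} (hφ : ∀ i, (φ i).IsQF) :
    (BoundedFormula.iInf φ).IsQF := by
  let _ := Fintype.ofFinite ι
  change (((Finset.univ : Finset ι).toList.map φ).foldr (· ⊓ ·) ⊤).IsQF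
  induction (Finset.univ : Finset ι).toList with
  | nil => exact .top
  | cons i _ ih => exact (hφ i).inf ih

lemma isQF_iSup {n : ℕ} [Finite ι] {φ : ι → L'.BoundedFormula α n} (hφ : ∀ i, (φ i).IsQF) :
    (BoundedFormula.iSup φ).IsQF := by
  let _ := Fintype.ofFinite ι
  change (((Finset.univ : Finset ι).toList.map φ).foldr (· ⊔ ·) ⊥).IsQF
  induction (Finset.univ : Finset ι).toList with
  | nil => exact BoundedFormula.isQF_bot
  | cons i _ ih => exact (hφ i).sup ih

lemma realize_iff_of_models_completeTheory {φ ψ : L'.Formula α} [Finite α]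
    (h : ∀ v : α → M, φ.Realize v ↔ ψ.Realize v) [N ⊨ L'.completeTheory M] (v : α → N) :
    φ.Realize v ↔ ψ.Realize v := by
  let θ : L'.Sentence := Formula.iAlls α (α := Empty) ((φ.iff ψ).relabel Sum.inr)
  have hθ : M ⊨ θ := by
    simpa [θ, Sentence.Realize, Formula.realize_iAlls, ← Function.comp_def] using h
  have hθN : N ⊨ θ := (realize_iff_of_model_completeTheory M N θ).2 hθ
  rw [Sentence.Realize, Formula.realize_iAlls] at hθN
  simpa using hθN v

/-- In `M`, every formula in finitely many free variables is equivalent to a quantifier-free one. -/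
def EliminatesQuantifiers (L' : Language) (M : Type*) [L'.Structure M] : Prop :=
  ∀ (k : ℕ) (φ : L'.Formula (Fin k)), ∃ ψ : L'.Formula (Fin k), ψ.IsQF ∧
    ∀ a : Fin k → M, φ.Realize a ↔ ψ.Realize a

namespace EliminatesQuantifiers

lemma exists_isQF (hM : EliminatesQuantifiers L' M) [Finite α] (φ : L'.Formula α) :
    ∃ ψ : L'.Formula α, ψ.IsQF ∧ ∀ a : α → M, φ.Realize a ↔ ψ.Realize a := by
  obtain ⟨k, ⟨e⟩⟩ := Finite.exists_equiv_fin α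
  obtain ⟨ψ, hψ, hφψ⟩ := hM k (φ.relabel e)
  refine ⟨ψ.relabel e.symm, hψ.relabel _, fun a => ?_⟩
  rw [Formula.realize_relabel, ← hφψ, Formula.realize_relabel, Function.comp_assoc,
    e.symm_comp_self, Function.comp_id]

lemma realize_comp_iff_of_models (hM : EliminatesQuantifiers L' M)
    [N ⊨ L'.completeTheory M] [K ⊨ L'.completeTheory M] (f : N ↪[L'] K) {k : ℕ}
    (φ : L'.Formula (Fin k)) (a : Fin k → N) : φ.Realize (f ∘ a) ↔ φ.Realize a := by
  obtain ⟨ψ, hψ, hφψ⟩ := hM k φ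
  rw [realize_iff_of_models_completeTheory hφψ, realize_iff_of_models_completeTheory hφψ,
    realize_embedding_comp_iff_of_isQF hψ]

end EliminatesQuantifiers

lemma exists_isQF_of_finite_family [Finite ι] {χ : ι → L'.Formula α} (hχ : ∀ i, (χ i).IsQF)
    {X : (α → M) → Prop}
    (hX : ∀ v w, (∀ i, (χ i).Realize v ↔ (χ i).Realize w) → X v → X w) :
    ∃ ψ : L'.Formula α, ψ.IsQF ∧ ∀ v, ψ.Realize v ↔ X v := by
  classical
  let literal (T : Set ι) (i : ι) : L'.Formula α := if i ∈ T then χ i else (χ i).not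
  have isQF_literal (T : Set ι) (i : ι) : (literal T i).IsQF := by
    by_cases hi : i ∈ T
    · simpa only [literal, if_pos hi] using hχ i
    · simpa only [literal, if_neg hi] using (hχ i).not
  have realize_literal (T : Set ι) (i : ι) (v : α → M) :
      (literal T i).Realize v ↔ ((χ i).Realize v ↔ i ∈ T) := by
    by_cases hi : i ∈ T <;> simp [literal, hi, Formula.realize_not]
  let types : Set (Set ι) := {T | ∃ v, X v ∧ ∀ i, (χ i).Realize v ↔ i ∈ T}
  refine ⟨Formula.iSup fun T : types => Formula.iInf (literal T),
    isQF_iSup fun T => isQF_iInf (isQF_literal T), fun v => ?_⟩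
  simp only [Formula.realize_iSup, Formula.realize_iInf, realize_literal]
  constructor
  · rintro ⟨⟨T, w, hw, hwT⟩, hvT⟩
    exact hX w v (fun i => (hwT i).trans (hvT i).symm) hw
  · exact fun hv => ⟨⟨{i | (χ i).Realize v}, v, hv, fun _ => Iff.rfl⟩, fun _ => Iff.rfl⟩

lemma exists_isQF_of_sameAtomicType [Finite α] {Δ : Set (Σ n, L'.Relations n)} (hΔ : Δ.Finite)
    {X : (α → M) → Prop} (hX : ∀ v w, SameAtomicType Δ v w → X v → X w) :
    ∃ ψ : L'.Formula α, ψ.IsQF ∧ ∀ v, ψ.Realize v ↔ X v := by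
  have := hΔ.to_subtype
  let atom : (α × α) ⊕ (Σ r : Δ, Fin r.1.1 → α) → L'.Formula α :=
    Sum.elim (fun p => Term.equal (.var p.1) (.var p.2))
      fun r => r.1.1.2.formula fun i => .var (r.2 i)
  have isQF_atom : ∀ i, (atom i).IsQF
    | .inl _ => (BoundedFormula.IsAtomic.equal _ _).isQF
    | .inr _ => (BoundedFormula.IsAtomic.rel _ _).isQF
  refine exists_isQF_of_finite_family isQF_atom fun v w hvw => hX v w ⟨fun i j => ?_, ?_⟩
  · simpa [atom] using hvw (.inl (i, j))
  · intro n r hr σ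
    simpa [atom, Formula.realize_rel, Function.comp_def] using hvw (.inr ⟨⟨⟨n, r⟩, hr⟩, σ⟩)

/-- The forth property for tuples of atomic `Δ`-types: whenever `b` has the same type as the
subtuple `a ∘ e` of `a`, it extends along `e` to a tuple of the same type as `a`. -/
def ExtendsAlong (Δ : Set (Σ n, L'.Relations n)) (M : Type*) [L'.Structure M] (e : ι → κ) : Prop :=
  ∀ (a : κ → M) (b : ι → M), SameAtomicType Δ (a ∘ e) b →
    ∃ c : κ → M, c ∘ e = b ∧ SameAtomicType Δ a c

/-- For every map `e` between finite types, every finite set of relation symbols is contained in a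
finite set `Δ` whose atomic types have the forth property along `e`. -/
def ExtendsCofinally (L' : Language) (M : Type*) [L'.Structure M] : Prop :=
  ∀ (ι κ : Type) [Finite ι] [Finite κ] (e : ι → κ) (Δ₀ : Set (Σ n, L'.Relations n)),
    Δ₀.Finite → ∃ Δ, Δ₀ ⊆ Δ ∧ Δ.Finite ∧ ExtendsAlong Δ M e

lemma EliminatesQuantifiers.extendsAlong_univ [L'.IsRelational] [Finite (Σ n, L'.Relations n)]
    [Finite ι] [Finite κ] (hM : EliminatesQuantifiers L' M) (e : ι → κ) :
    ExtendsAlong (Set.univ : Set (Σ n, L'.Relations n)) M e := by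
  intro a b hab
  obtain ⟨χ, -, hχ⟩ := exists_isQF_of_sameAtomicType (α := ι ⊕ κ) Set.finite_univ
    (X := SameQFType L' (M := M) (N := M) (Sum.elim (a ∘ e) a)) fun _ _ hvw ha => ha.trans hvw
  obtain ⟨ψ, hψ, hχψ⟩ := hM.exists_isQF (Formula.iExs κ χ)
  have realize_ψ (v : ι → M) :
      ψ.Realize v ↔ ∃ c, SameQFType L' (Sum.elim (a ∘ e) a) (Sum.elim v c) := by
    simp only [← hχψ, Formula.realize_iExs, hχ]
  obtain ⟨c, hc⟩ := (realize_ψ b).1 <|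
    (realize_iff_of_isQF_of_sameQFType hψ hab).1 ((realize_ψ _).2 ⟨a, .refl _ _⟩)
  exact ⟨c, funext fun i => (hc.eq_iff (.inr (e i)) (.inl i)).1 rfl, hc.comp Sum.inr⟩

section Reduct

variable {L₁ : Language} [L₁.Structure M] [L₁.Structure N]

/-- The relation symbols of `L'` that come from `L₁`. -/
def relRange (φ : L₁ →ᴸ L') : Set (Σ n, L'.Relations n) :=
  Set.range fun r : Σ n, L₁.Relations n => ⟨r.1, φ.onRelation r.2⟩

lemma sameAtomicType_relRange_iff (φ : L₁ →ᴸ L') [φ.IsExpansionOn M] [φ.IsExpansionOn N]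
    {a : α → M} {b : α → N} :
    SameAtomicType (relRange φ) a b ↔
      SameQFType L₁ a b := by
  constructor
  · refine fun h => ⟨h.eq_iff, fun r _ σ => ?_⟩
    simpa only [LHom.map_onRelation] using h.rel_iff (φ.onRelation r) ⟨⟨_, r⟩, rfl⟩ σ
  · refine fun h => ⟨h.eq_iff, ?_⟩
    rintro n _ ⟨⟨m, r⟩, ⟨⟩⟩ σ
    simpa only [LHom.map_onRelation] using h.rel_iff r trivial σ

lemma EliminatesQuantifiers.extendsAlong_relRange [L₁.IsRelational] [Finite (Σ n, L₁.Relations n)]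
    [Finite ι] [Finite κ] (hM : EliminatesQuantifiers L₁ M) (φ : L₁ →ᴸ L') [φ.IsExpansionOn M]
    (e : ι → κ) : ExtendsAlong (relRange φ) M e := by
  simpa only [ExtendsAlong, sameAtomicType_relRange_iff] using hM.extendsAlong_univ e

end Reduct

section Criterion

variable [L'.IsRelational]

lemma exists_eq_var (t : L'.Term α) : ∃ i, t = .var i := by
  cases t with
  | var i => exact ⟨i, rfl⟩
  | func f _ => exact isEmptyElim f

lemma elim_snoc_comp_map {n : ℕ} (v : α → M) (x : Fin n → M) (z : M) :
    Sum.elim v (Fin.snoc x z : Fin (n + 1) → M) ∘ Sum.map id Fin.castSucc = Sum.elim v x := by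
  ext (i | i) <;> simp

lemma eq_elim_snoc_of_comp_map_eq {n : ℕ} {c : α ⊕ Fin (n + 1) → M} {v : α → M} {x : Fin n → M}
    (h : c ∘ Sum.map id Fin.castSucc = Sum.elim v x) :
    c = Sum.elim v (Fin.snoc x (c (.inr (Fin.last n))) : Fin (n + 1) → M) := by
  ext (i | i)
  · exact congrFun h (.inl i)
  · refine Fin.lastCases (by simp) (fun i => ?_) i
    simpa using congrFun h (.inr i)

lemma ExtendsCofinally.exists_finite_forall_realize_iff (hM : ExtendsCofinally L' M)
    {α : Type} [Finite α] {n : ℕ} (φ : L'.BoundedFormula α n) :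
    ∃ Δ : Set (Σ n, L'.Relations n), Δ.Finite ∧ ∀ (v w : α → M) (x y : Fin n → M),
      SameAtomicType Δ (Sum.elim v x) (Sum.elim w y) → (φ.Realize v x ↔ φ.Realize w y) := by
  induction φ with
  | falsum => exact ⟨∅, Set.finite_empty, fun _ _ _ _ _ => Iff.rfl⟩
  | equal t₁ t₂ =>
    obtain ⟨i, rfl⟩ := exists_eq_var t₁
    obtain ⟨j, rfl⟩ := exists_eq_var t₂
    exact ⟨∅, Set.finite_empty, fun v w x y h => h.eq_iff i j⟩
  | rel r ts =>
    choose σ hσ using fun i => exists_eq_var (ts i)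
    obtain rfl : ts = fun i => .var (σ i) := funext hσ
    exact ⟨{⟨_, r⟩}, Set.finite_singleton _, fun v w x y h => h.rel_iff r rfl σ⟩
  | imp φ ψ hφ hψ =>
    obtain ⟨Δ, hΔ, hφ⟩ := hφ
    obtain ⟨Δ', hΔ', hψ⟩ := hψ
    refine ⟨Δ ∪ Δ', hΔ.union hΔ', fun v w x y h => ?_⟩
    rw [BoundedFormula.realize_imp, BoundedFormula.realize_imp,
      hφ v w x y (h.mono Set.subset_union_left), hψ v w x y (h.mono Set.subset_union_right)]
  | @all n φ hφ =>
    obtain ⟨Δ₀, hΔ₀, hφ⟩ := hφ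
    obtain ⟨Δ, hΔ₀Δ, hΔ, hext⟩ := hM (α ⊕ Fin n) (α ⊕ Fin (n + 1)) (Sum.map id Fin.castSucc) Δ₀ hΔ₀
    have transfer (v w : α → M) (x y : Fin n → M)
        (h : SameAtomicType Δ (Sum.elim v x) (Sum.elim w y))
        (hy : ∀ z, φ.Realize w (Fin.snoc y z)) (z : M) : φ.Realize v (Fin.snoc x z) := by
      obtain ⟨c, hcy, hc⟩ := hext (Sum.elim v (Fin.snoc x z)) (Sum.elim w y)
        (by rwa [elim_snoc_comp_map])
      rw [eq_elim_snoc_of_comp_map_eq hcy] at hc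
      exact (hφ _ _ _ _ (hc.mono hΔ₀Δ)).2 (hy _)
    exact ⟨Δ, hΔ, fun v w x y h => ⟨transfer w v y x h.symm, transfer v w x y h⟩⟩

lemma ExtendsCofinally.eliminatesQuantifiers (hM : ExtendsCofinally L' M) :
    EliminatesQuantifiers L' M := by
  intro k φ
  obtain ⟨Δ, hΔ, hφ⟩ := hM.exists_finite_forall_realize_iff φ
  have elim_default (v : Fin k → M) :
      Sum.elim v (default : Fin 0 → M) = v ∘ Sum.elim id default := by
    rw [Sum.comp_elim, Function.comp_id, Subsingleton.elim default (v ∘ _)]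
  obtain ⟨ψ, hψ, hψφ⟩ := exists_isQF_of_sameAtomicType hΔ (X := φ.Realize) fun v w h =>
    (hφ v w default default (by simpa only [elim_default] using h.comp _)).1
  exact ⟨ψ, hψ, fun a => (hψφ a).symm⟩

end Criterion

end QuantifierElimination

section Language

variable {ar : ℕ → ℕ} {s t : Set ℕ} {n : ℕ}

lemma inl_mem_relRange (h : t ⊆ s) (r : L.Relations n) :
    ⟨n, Sum.inl r⟩ ∈ relRange (LFullincl ar h) :=
  ⟨⟨n, Sum.inl r⟩, rfl⟩

lemma mem_relRange_L0incl (h : t ⊆ s) {r : (L0r ar s).Relations n} (hr : r.1 ∈ t) :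
    ⟨n, r⟩ ∈ relRange (L0incl ar h) :=
  ⟨⟨n, r.1, r.2.1, hr, r.2.2.2⟩, rfl⟩

lemma inr_mem_relRange (h : t ⊆ s) {r : (L0r ar s).Relations n}
    (hr : ⟨n, r⟩ ∈ relRange (L0incl ar h)) : ⟨n, Sum.inr r⟩ ∈ relRange (LFullincl ar h) := by
  obtain ⟨⟨m, r⟩, ⟨⟩⟩ := hr
  exact ⟨⟨m, Sum.inr r⟩, rfl⟩

instance finite_relations_L : Finite (Σ n, L.Relations n) := by
  refine .of_surjective (![⟨1, .P⟩, ⟨1, .Q⟩, ⟨1, .lam⟩, ⟨1, .rho⟩, ⟨2, .H⟩, ⟨4, .S⟩] :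
    Fin 6 → Σ n, LRel n) ?_
  rintro ⟨_, _ | _⟩
  exacts [⟨0, rfl⟩, ⟨1, rfl⟩, ⟨2, rfl⟩, ⟨3, rfl⟩, ⟨4, rfl⟩, ⟨5, rfl⟩]

instance finite_relations_L0r [Finite s] : Finite (Σ n, (L0r ar s).Relations n) := by
  refine .of_injective (fun r => (⟨r.2.1, r.2.2.2.1⟩ : s)) ?_
  rintro ⟨_, m, _, _, rfl⟩ ⟨_, m', _, _, rfl⟩ hm
  obtain rfl : m = m' := congrArg Subtype.val hm
  rfl

instance finite_relations_LFull [Finite s] : Finite (Σ n, (LFull ar s).Relations n) :=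
  .of_equiv _ (Equiv.sigmaSumDistrib L.Relations (L0r ar s).Relations).symm

lemma exists_finite_subset_relRange {Δ₀ : Set (Σ n, (LFull ar s).Relations n)} (hΔ₀ : Δ₀.Finite) :
    ∃ F ⊆ s, F.Finite ∧ ∀ t (h : t ⊆ s), F ⊆ t → Δ₀ ⊆ relRange (LFullincl ar h) := by
  let index (r : Σ n, (LFull ar s).Relations n) : ℕ := Sum.elim (fun _ => 0) Subtype.val r.2
  refine ⟨s ∩ index '' Δ₀, Set.inter_subset_left,
    (hΔ₀.image _).subset Set.inter_subset_right, ?_⟩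
  rintro t h hFt ⟨n, r | r⟩ hr
  · exact inl_mem_relRange h r
  · exact inr_mem_relRange h (mem_relRange_L0incl h (hFt ⟨r.2.2.1, _, hr, rfl⟩))

/-- Every finite set of relation symbols `Rₙ` lies in a finite sublanguage of `L₀` whose reduct of
`M₀` has quantifier elimination. -/
def ReductsEliminateQuantifiers (ar : ℕ → ℕ) (s : Set ℕ) (M₀ : Type*) [(L0r ar s).Structure M₀] :
    Prop :=
  ∀ F ⊆ s, F.Finite → ∃ (t : Set ℕ) (h : t ⊆ s), F ⊆ t ∧ t.Finite ∧
    @EliminatesQuantifiers (L0r ar t) M₀ ((L0incl ar h).reduct M₀)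

lemma reductsEliminateQuantifiers_of_setLe {li : ℕ → ℕ} (hli : ∀ n, ∃ i, n ≤ li i) {M₀ : Type*}
    [(L0r ar Set.univ).Structure M₀]
    (hqe : ∀ (i k : ℕ) (φ : (L0r ar (setLe (li i))).Formula (Fin k)),
      ∃ ψ : (L0r ar (setLe (li i))).Formula (Fin k), ψ.IsQF ∧ ∀ a : Fin k → M₀,
        Formula.Realize ((L0incl ar (Set.subset_univ _)).onFormula φ) a ↔
          Formula.Realize ((L0incl ar (Set.subset_univ _)).onFormula ψ) a) :
    ReductsEliminateQuantifiers ar Set.univ M₀ := by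
  intro F _ hF
  obtain ⟨N, hN⟩ := hF.bddAbove
  obtain ⟨i, hi⟩ := hli N
  refine ⟨setLe (li i), Set.subset_univ _, fun n hn => (hN hn).trans hi, Set.finite_Iic _, ?_⟩
  let _ := (L0incl ar (Set.subset_univ (setLe (li i)))).reduct M₀
  simpa only [EliminatesQuantifiers, LHom.realize_onFormula] using hqe i

end Language

section Relabelling

variable {ar : ℕ → ℕ} {s t : Set ℕ} {h : t ⊆ s} {M₀ : Type u} [(L0r ar s).Structure M₀]
  {D D' : Type u} [(LFull ar s).Structure D] [(LFull ar s).Structure D'] {ι : Type*}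
  {x : ι → D} {y : ι → D'}

lemma SameAtomicType.isP_iff (hxy : SameAtomicType (relRange (LFullincl ar h)) x y) (i : ι) :
    isP ar s (x i) ↔ isP ar s (y i) := by
  simpa only [isP, Matrix.vec_single_eq_const, Function.comp_def] using
    hxy.rel_iff (Sum.inl LRel.P) (inl_mem_relRange h _) fun _ => i

lemma SameAtomicType.codRestrict_isP (hxy : SameAtomicType (relRange (LFullincl ar h)) x y)
    (hx : ∀ i, isP ar s (x i)) (hy : ∀ i, isP ar s (y i)) :
    SameAtomicType (relRange (L0incl ar h)) (fun i => (⟨x i, hx i⟩ : Ppart ar s D))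
      fun i => (⟨y i, hy i⟩ : Ppart ar s D') :=
  ⟨fun i j => by simpa only [Subtype.mk.injEq] using hxy.eq_iff i j,
    fun r hr σ => hxy.rel_iff (Sum.inr r) (inr_mem_relRange h hr) σ⟩

/-- The structure obtained from `D` by redefining the relations `Rₙ` on its `P`-part as the
preimages under `g` of the relations `Rₙ` of `M₀`, all other relations being kept. -/
def Relabelled (_g : Ppart ar s D → M₀) : Type u := D

/-- The identity map from `D` to its relabelling along `g`. -/
def Relabelled.of (g : Ppart ar s D → M₀) (d : D) : Relabelled g := d

variable {g : Ppart ar s D → M₀}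

instance : (LFull ar s).Structure (Relabelled g) where
  funMap f _ := isEmptyElim f
  RelMap
    | .inl r, t => RelMap (L := LFull ar s) (M := D) (Sum.inl r) t
    | .inr r, t => ∃ ht : ∀ i, isP ar s (M := D) (t i), RelMap r fun i => g ⟨t i, ht i⟩

lemma IsGood.relabelled (hD : IsGood ar s D) : IsGood ar s (Relabelled g) :=
  { hD with r_p := fun _ _ _ ht => ht.1 }

lemma IsNPair.of_relabelled {n m : ℕ} {a : Fin m → Relabelled g} {c : Fin n → Relabelled g}
    (hac : IsNPair ar s n m a c) : IsNPair ar s (M := D) n m a c :=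
  { hac with }

lemma sameAtomicType_id_relabelledOf (hD : IsGood ar s D)
    (hg : SameAtomicType (relRange (L0incl ar h)) id g) :
    SameAtomicType (relRange (LFullincl ar h)) (id : D → D) (Relabelled.of g) := by
  refine ⟨fun _ _ => Iff.rfl, ?_⟩
  rintro n _ ⟨⟨n, r | r⟩, ⟨⟩⟩ σ
  · exact Iff.rfl
  · have rel_iff (hσ : ∀ i, isP ar s (σ i)) :=
      hg.rel_iff ((L0incl ar h).onRelation r) ⟨⟨n, r⟩, rfl⟩ fun i => ⟨σ i, hσ i⟩
    constructor
    · exact fun hr => ⟨hD.r_p _ _ _ hr, (rel_iff _).1 hr⟩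
    · exact fun ⟨hσ, hr⟩ => (rel_iff hσ).2 hr

lemma relabelled_mem_Kclass (hD : Bundled.mk D ∈ Kclass ar s M₀)
    (hg : SameAtomicType (relRange (L0incl ar h)) id g)
    (ht : ∀ n ∈ s, n ≤ Nat.card D → n ∈ t) : Bundled.mk (Relabelled g) ∈ Kclass ar s M₀ := by
  obtain ⟨hfin, hgood, -, hlabel⟩ := hD
  have : Finite D := hfin
  have ginj : Function.Injective g := fun p q hpq => (hg.eq_iff p q).2 hpq
  let emb : Ppart ar s (Relabelled g) ↪[L0r ar s] M₀ :=
    ⟨⟨g, ginj⟩, fun f => isEmptyElim f,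
      fun r p => ⟨fun hr => ⟨fun i => (p i).2, hr⟩, fun hr => hr.2⟩⟩
  refine ⟨hfin, hgood.relabelled, ⟨emb⟩, fun n hn hns a c hac => ?_⟩
  have hnD : n ≤ Nat.card D := by
    simpa using Nat.card_le_card_of_injective (β := D) c hac.inj
  have hr := inr_mem_relRange h (mem_relRange_L0incl h (r := R ar s n hn hns) (ht n hns hnD))
  exact ((sameAtomicType_id_relabelledOf hgood hg).rel_iff _ hr a).1
    (hlabel n hn hns a c (IsNPair.of_relabelled (g := g) hac))

lemma sameQFType_relabelled (hD' : IsGood ar s D')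
    (hxy : SameAtomicType (relRange (LFullincl ar h)) x y) (f : Ppart ar s D' ↪[L0r ar s] M₀)
    (hg : ∀ i (hi : isP ar s (x i)), g ⟨x i, hi⟩ = f ⟨y i, (hxy.isP_iff i).1 hi⟩) :
    SameQFType (LFull ar s) (Relabelled.of g ∘ x) y := by
  refine ⟨hxy.eq_iff, ?_⟩
  rintro n (r | r) - σ
  · exact hxy.rel_iff _ (inl_mem_relRange h r) σ
  · have rel_iff (hσ : ∀ i, isP ar s (x (σ i))) :
        RelMap r (fun i => g ⟨x (σ i), hσ i⟩) ↔ RelMap (L := LFull ar s) (Sum.inr r) (y ∘ σ) := by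
      simp only [hg]
      exact f.map_rel r _
    refine ⟨fun ⟨hσ, hr⟩ => (rel_iff hσ).1 hr, fun hr => ?_⟩
    have hσ i : isP ar s (x (σ i)) := (hxy.isP_iff _).2 (hD'.r_p _ _ _ hr i)
    exact ⟨hσ, (rel_iff hσ).2 hr⟩

lemma exists_relabelling (hM₀ : @EliminatesQuantifiers (L0r ar t) M₀ ((L0incl ar h).reduct M₀))
    [Finite t] [Finite ι] (hD : Bundled.mk D ∈ Kclass ar s M₀)
    (hD' : Bundled.mk D' ∈ Kclass ar s M₀)
    (hxy : SameAtomicType (relRange (LFullincl ar h)) x y) :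
    ∃ g : Ppart ar s D → M₀, SameAtomicType (relRange (L0incl ar h)) id g ∧
      SameQFType (LFull ar s) (Relabelled.of g ∘ x) y := by
  obtain ⟨hfin, -, ⟨f⟩, -⟩ := hD
  obtain ⟨-, hD'good, ⟨f'⟩, -⟩ := hD'
  have : Finite D := hfin
  let _ := (L0incl ar h).reduct M₀
  have := LHom.isExpansionOn_reduct (L0incl ar h) M₀
  let xP (i : {i // isP ar s (x i)}) : Ppart ar s D := ⟨x i, i.2⟩
  let yP (i : {i // isP ar s (x i)}) : Ppart ar s D' := ⟨y i, (hxy.isP_iff i).1 i.2⟩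
  have hxyP : SameAtomicType (relRange (L0incl ar h)) xP yP :=
    (hxy.comp Subtype.val).codRestrict_isP _ _
  obtain ⟨g, hgx, hfg⟩ := hM₀.extendsAlong_relRange (L0incl ar h) xP f (f' ∘ yP)
    (((SameAtomicType.of_embedding _ f xP).symm.trans hxyP).trans (.of_embedding _ f' yP))
  exact ⟨g, (SameAtomicType.of_embedding _ f id).trans hfg,
    sameQFType_relabelled hD'good hxy f' fun i hi => congrFun hgx ⟨i, hi⟩⟩

end Relabelling

section Generic

variable {ar : ℕ → ℕ} {s t : Set ℕ} {h : t ⊆ s} {M₀ : Type u} [(L0r ar s).Structure M₀]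
  {U : Type u} [(LFull ar s).Structure U]

lemma closure_range_mem_Kclass (hUage : (LFull ar s).age U = Kclass ar s M₀) {γ : Type*} [Finite γ]
    (z : γ → U) :
    Bundled.mk (Substructure.closure (LFull ar s) (Set.range z)) ∈ Kclass ar s M₀ :=
  hUage ▸ age.fg_substructure (Substructure.fg_closure (Set.finite_range z))

lemma extendsAlong_generic (hM₀ : @EliminatesQuantifiers (L0r ar t) M₀ ((L0incl ar h).reduct M₀))
    [Finite t] (hUhom : (LFull ar s).IsUltrahomogeneous U)
    (hUage : (LFull ar s).age U = Kclass ar s M₀) {ι κ : Type*} [Finite ι] [Finite κ]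
    (hκ : ∀ n ∈ s, n ≤ Nat.card κ → n ∈ t) (e : ι → κ) :
    ExtendsAlong (relRange (LFullincl ar h)) U e := by
  intro a b hab
  let A := Substructure.closure (LFull ar s) (Set.range a)
  let B := Substructure.closure (LFull ar s) (Set.range b)
  let a' (i : κ) : A := ⟨a i, Substructure.subset_closure ⟨i, rfl⟩⟩
  let b' (i : ι) : B := ⟨b i, Substructure.subset_closure ⟨i, rfl⟩⟩
  have hA := closure_range_mem_Kclass hUage a
  have ha' := SameAtomicType.of_embedding (relRange (LFullincl ar h)) A.subtype a'
  have hb' := SameAtomicType.of_embedding (relRange (LFullincl ar h)) B.subtype b'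
  obtain ⟨g, hg, hgb⟩ := exists_relabelling hM₀ hA (closure_range_mem_Kclass hUage b)
    (((ha'.comp e).trans hab).trans hb'.symm)
  obtain ⟨-, ⟨i⟩⟩ : Bundled.mk (Relabelled g) ∈ (LFull ar s).age U :=
    hUage ▸ relabelled_mem_Kclass hA hg fun n hns hn =>
      hκ n hns (hn.trans (card_closure_range_le a))
  have : Nonempty (Relabelled g ↪[LFull ar s] U) := ⟨i⟩
  obtain ⟨j, hj⟩ := exists_embedding_comp_eq hUhom (hgb.trans (.of_embedding _ B.subtype b'))
  refine ⟨j ∘ Relabelled.of g ∘ a', hj, ?_⟩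
  exact (ha'.symm.trans ((sameAtomicType_id_relabelledOf hA.2.1 hg).comp a')).trans
    (.of_embedding _ j (Relabelled.of g ∘ a'))

end Generic

theorem statement_13_general (ar : ℕ → ℕ) (s : Set ℕ)
    (M₀ : Type u) [(L0r ar s).Structure M₀] (hM₀ : ReductsEliminateQuantifiers ar s M₀)
    (U : Type u) [(LFull ar s).Structure U] (hUhom : (LFull ar s).IsUltrahomogeneous U)
    (hUage : (LFull ar s).age U = Kclass ar s M₀) :
    EliminatesQuantifiers (LFull ar s) U := by
  refine ExtendsCofinally.eliminatesQuantifiers fun ι κ _ _ e Δ₀ hΔ₀ => ?_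
  obtain ⟨F, hFs, hF, hFΔ₀⟩ := exists_finite_subset_relRange hΔ₀
  obtain ⟨t, h, hFκt, ht, hqe⟩ := hM₀ (F ∪ s ∩ Set.Iic (Nat.card κ))
    (Set.union_subset hFs Set.inter_subset_left)
    (hF.union ((Set.finite_Iic _).subset Set.inter_subset_right))
  obtain ⟨hFt, hκt⟩ := Set.union_subset_iff.1 hFκt
  have : Finite t := ht
  exact ⟨relRange (LFullincl ar h), hFΔ₀ t h hFt, Set.finite_range _,
    extendsAlong_generic hqe hUhom hUage (fun n hns hn => hκt ⟨hns, hn⟩) e⟩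

/-- The theory of the generic structure `U` is model complete: between any
two models of `Th(U)`, any embedding (in particular any substructure inclusion) is
elementary. -/
theorem statement_13
    (ar : ℕ → ℕ)
    (har_le : ∀ n : ℕ, 0 < n → ar n ≤ n)
    (har_mono : ∀ m n : ℕ, 0 < m → m ≤ n → ar m ≤ ar n)
    (li : ℕ → ℕ) (hli_pos : ∀ i, 0 < li i) (hli_mono : StrictMono li)
    (hli_cof : ∀ n : ℕ, ∃ i, n ≤ li i)
    (hli_arity : ∀ i : ℕ, ar (li i) < ar (li (i + 1)))
    (M₀ : Type u) [(L0r ar Set.univ).Structure M₀] [Countable M₀] [Infinite M₀]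
    (hqe : ∀ (i k : ℕ) (φ : (L0r ar (setLe (li i))).Formula (Fin k)),
      ∃ ψ : (L0r ar (setLe (li i))).Formula (Fin k), ψ.IsQF ∧
        ∀ a : Fin k → M₀,
          Formula.Realize (L := L0r ar Set.univ)
              ((L0incl ar (Set.subset_univ _)).onFormula φ) a ↔
            Formula.Realize (L := L0r ar Set.univ)
              ((L0incl ar (Set.subset_univ _)).onFormula ψ) a)
    (hM0hom : (L0r ar Set.univ).IsUltrahomogeneous M₀)
    (hM0jep : JointEmbedding ((L0r ar Set.univ).age M₀))
    (hM0ap : Amalgamation ((L0r ar Set.univ).age M₀))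
    (U : Type u) [(LFull ar Set.univ).Structure U] [Countable U]
    (hUhom : (LFull ar Set.univ).IsUltrahomogeneous U)
    (hUage : (LFull ar Set.univ).age U = Kclass ar Set.univ M₀) :
    ∀ (U' U'' : Type u) [(LFull ar Set.univ).Structure U'] [(LFull ar Set.univ).Structure U''],
      Theory.Model U' ((LFull ar Set.univ).completeTheory U) →
      Theory.Model U'' ((LFull ar Set.univ).completeTheory U) →
      ∀ (f : U' ↪[LFull ar Set.univ] U'')
        (k : ℕ) (φ : (LFull ar Set.univ).Formula (Fin k)) (a : Fin k → U'),
        φ.Realize (⇑f ∘ a) ↔ φ.Realize a := by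
  intro U' U'' _ _ _ _ f k φ a
  exact (statement_13_general ar Set.univ M₀ (reductsEliminateQuantifiers_of_setLe hli_cof hqe)
    U hUhom hUage).realize_comp_iff_of_models f φ a

end Ivanov
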